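/- arXiv:1709.04379 — 3 statements merged into one kernel-verified Lean document; each statement's English description precedes it below -/
import Mathlib

section
/- There exist no elements a, b ∈ ℚ(i) such that a² − 5b² = i. Equivalently, i is not the relative norm N_{L/K}(z) = z·σ(z) of any element z of L = ℚ(i, √5) over K = ℚ(i), where σ is the nontrivial K-automorphism of L (sending √5 to −√5). -/
/-!
If `p ≡ 5 (mod 8)`, then `-1` is a square modulo `p`, so by Hensel's lemma `ℚ(i)` embeds into `ℚ_p`.
When `d` has odd `p`-adic valuation, `v(a²)` is even and `v(d b²)` is odd, so nothing cancels in
`a² - d b²`; if this difference is a `p`-adic integer, then `a` is one too and `d b²` vanishes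
modulo `p`. Hence `a² - d b² = i` would make the residue of `i` a square, giving an element of
order `8` in `𝔽_pˣ`, a group of order `4 (mod 8)`.
-/

theorem norm_mul_sq_ne_one {K : Type*} [NormedField K] {b c : K}
    (hc : ∀ x : K, ‖x‖ ^ 2 ≠ ‖c‖) : ‖c * b ^ 2‖ ≠ 1 := fun h ↦
  hc b⁻¹ <| by
    rw [norm_mul, norm_pow] at h
    rw [norm_inv, inv_pow, ← eq_inv_of_mul_eq_one_left h]

section Ultrametric

variable {K : Type*} [NormedField K] [IsUltrametricDist K] {a b c : K}

theorem norm_sq_sub_mul_sq (hc : ∀ x : K, ‖x‖ ^ 2 ≠ ‖c‖) :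
    ‖a ^ 2 - c * b ^ 2‖ = max ‖a ^ 2‖ ‖c * b ^ 2‖ := by
  rcases eq_or_ne b 0 with rfl | hb
  · simp
  have norm_ne : ‖a ^ 2‖ ≠ ‖c * b ^ 2‖ := fun heq ↦ hc (a / b) <| by
    rw [norm_div, div_pow, ← norm_pow, heq, norm_mul, norm_pow,
      mul_div_cancel_right₀ _ (pow_ne_zero 2 (norm_ne_zero_iff.mpr hb))]
  simpa only [sub_eq_add_neg, norm_neg] using
    IsUltrametricDist.norm_add_eq_max_of_norm_ne_norm (y := -(c * b ^ 2)) (by rwa [norm_neg])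

theorem norm_le_one_and_norm_mul_sq_lt_one (hc : ∀ x : K, ‖x‖ ^ 2 ≠ ‖c‖)
    (h : ‖a ^ 2 - c * b ^ 2‖ ≤ 1) : ‖a‖ ≤ 1 ∧ ‖c * b ^ 2‖ < 1 := by
  rw [norm_sq_sub_mul_sq hc, max_le_iff, norm_pow] at h
  exact ⟨(pow_le_one_iff_of_nonneg (norm_nonneg a) two_ne_zero).mp h.1,
    h.2.lt_of_ne (norm_mul_sq_ne_one hc)⟩

end Ultrametric

theorem isSquare_of_isSquare_quotientMk {R : Type*} [CommRing R] {I : Ideal R} [HenselianRing R I]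
    {u : R} (h2 : IsUnit (2 : R)) (hu : IsUnit u) (h : IsSquare (Ideal.Quotient.mk I u)) :
    IsSquare u := by
  obtain ⟨y, hy⟩ := h
  obtain ⟨x, rfl⟩ := Ideal.Quotient.mk_surjective y
  rw [← map_mul] at hy
  have isUnit_mk_x : IsUnit (Ideal.Quotient.mk I x) :=
    isUnit_of_mul_isUnit_left (y := Ideal.Quotient.mk I x) <| by
      rw [← map_mul, ← hy]
      exact hu.map _
  obtain ⟨z, hz, -⟩ := HenselianRing.is_henselian (I := I) (.X ^ 2 - .C u)
    (Polynomial.monic_X_pow_sub_C u two_ne_zero) x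
    (by simpa [pow_two] using Ideal.Quotient.eq.mp hy.symm)
    (by simpa [one_add_one_eq_two] using (h2.map (Ideal.Quotient.mk I)).mul isUnit_mk_x)
  exact ⟨z, by simpa [Polynomial.IsRoot, sub_eq_zero, pow_two, eq_comm] using hz⟩

theorem not_isSquare_of_sq_eq_neg_one {F : Type*} [Field F] [Fintype F]
    (hF : Fintype.card F % 8 = 5) {x : F} (hx : x ^ 2 = -1) : ¬IsSquare x := by
  rintro ⟨y, rfl⟩
  have y_ne_zero : y ≠ 0 := by
    rintro rfl
    simp at hx
  have card_sub_one : Fintype.card F - 1 = 4 * (2 * (Fintype.card F / 8) + 1) := by omega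
  have one_eq_neg_one : (1 : F) = -1 := calc
    1 = y ^ (Fintype.card F - 1) := (FiniteField.pow_card_sub_one_eq_one y y_ne_zero).symm
    _ = ((y * y) ^ 2) ^ (2 * (Fintype.card F / 8) + 1) := by
      rw [card_sub_one, pow_mul, ← pow_two, ← pow_mul y 2 2]
    _ = -1 := by rw [hx, (odd_two_mul_add_one _).neg_one_pow]
  have char_ne_two : ringChar F ≠ 2 := fun h ↦ by
    have := FiniteField.even_card_of_char_two h
    omega
  exact Ring.neg_one_ne_one_of_char_ne_two char_ne_two one_eq_neg_one.symm

section Padic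

variable {p : ℕ} [Fact p.Prime]

theorem norm_sq_ne_norm_of_odd_valuation {c : ℚ_[p]} (hc : Odd c.valuation) (x : ℚ_[p]) :
    ‖x‖ ^ 2 ≠ ‖c‖ := by
  have c_ne_zero : c ≠ 0 := by
    rintro rfl
    simp at hc
  intro h
  have x_ne_zero : x ≠ 0 := by
    rintro rfl
    exact c_ne_zero (by simpa using h.symm)
  rw [← norm_pow, Padic.norm_eq_zpow_neg_valuation (pow_ne_zero 2 x_ne_zero),
    Padic.norm_eq_zpow_neg_valuation c_ne_zero] at h
  have hp : (1 : ℝ) < p := mod_cast (Fact.out : p.Prime).one_lt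
  have valuation_eq := neg_injective (zpow_right_injective₀ (by positivity) hp.ne' h)
  rw [Padic.valuation_pow] at valuation_eq
  rw [← valuation_eq] at hc
  exact Int.not_even_iff_odd.mpr hc (even_two.mul_right _)

theorem toZMod_eq_zero_of_norm_lt_one {x : ℤ_[p]} (hx : ‖x‖ < 1) : PadicInt.toZMod x = 0 := by
  rwa [← RingHom.mem_ker, PadicInt.ker_toZMod, IsLocalRing.mem_maximalIdeal, PadicInt.mem_nonunits]

theorem isSquare_toZMod_of_sq_sub_mul_sq_eq {a b c : ℚ_[p]} {u : ℤ_[p]} (hc : Odd c.valuation)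
    (h : a ^ 2 - c * b ^ 2 = u) : IsSquare (PadicInt.toZMod u) := by
  obtain ⟨ha, hcb⟩ := norm_le_one_and_norm_mul_sq_lt_one (norm_sq_ne_norm_of_odd_valuation hc)
    (h ▸ u.norm_le_one : ‖a ^ 2 - c * b ^ 2‖ ≤ 1)
  obtain ⟨a, rfl⟩ : ∃ a' : ℤ_[p], (a' : ℚ_[p]) = a := ⟨⟨a, ha⟩, rfl⟩
  have norm_sub_lt_one : ‖a ^ 2 - u‖ < 1 := by
    rw [PadicInt.norm_def]
    push_cast
    rwa [← h, sub_sub_cancel]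
  refine ⟨PadicInt.toZMod a, ?_⟩
  rw [← pow_two, ← map_pow, eq_comm, ← sub_eq_zero, ← map_sub]
  exact toZMod_eq_zero_of_norm_lt_one norm_sub_lt_one

theorem isSquare_neg_one_padicInt (hp : p % 4 = 1) : IsSquare (-1 : ℤ_[p]) := by
  have isUnit_two : IsUnit (2 : ℤ_[p]) := by
    rw [PadicInt.isUnit_iff]
    refine mod_cast PadicInt.norm_natCast_eq_one_iff (p := p) (n := 2) |>.mpr ?_
    exact (Nat.coprime_primes Fact.out Nat.prime_two).mpr (by rintro rfl; omega)
  refine isSquare_of_isSquare_quotientMk (I := IsLocalRing.maximalIdeal ℤ_[p])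
    isUnit_two isUnit_one.neg ?_
  have isSquare_zmod : IsSquare (-1 : ZMod p) := ZMod.exists_sq_eq_neg_one_iff.mpr (by omega)
  have isSquare_residue : IsSquare (-1 : IsLocalRing.ResidueField ℤ_[p]) := by
    simpa only [map_neg, map_one] using isSquare_zmod.map PadicInt.residueField.symm
  rwa [map_neg, map_one]

theorem sq_sub_mul_sq_ne_of_sq_eq_neg_one (hp : p % 8 = 5) {ι : ℤ_[p]} (hι : ι ^ 2 = -1)
    {c : ℚ_[p]} (hc : Odd c.valuation) (a b : ℚ_[p]) : a ^ 2 - c * b ^ 2 ≠ ι := fun h ↦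
  not_isSquare_of_sq_eq_neg_one (by rwa [ZMod.card]) (by rw [← map_pow, hι, map_neg, map_one])
    (isSquare_toZMod_of_sq_sub_mul_sq_eq hc h)

end Padic

theorem sq_sub_mul_sq_eq_of_complex {A : Type*} [Field A] [CharZero A] {ι : A} (hι : ι ^ 2 = -1)
    {d x y z w : ℚ}
    (h : ((x : ℂ) + (y : ℂ) * Complex.I) ^ 2 - d * ((z : ℂ) + (w : ℂ) * Complex.I) ^ 2
      = Complex.I) :
    ((x : A) + y * ι) ^ 2 - d * ((z : A) + w * ι) ^ 2 = ι := by
  have re_eq : (x : ℝ) * x - y * y - d * (z * z - w * w) = 0 := by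
    simpa [pow_two] using congrArg Complex.re h
  have im_eq : (x : ℝ) * y + y * x - d * (z * w + w * z) = 1 := by
    simpa [pow_two] using congrArg Complex.im h
  norm_cast at re_eq im_eq
  have re_eq_cast : (x : A) * x - y * y - d * (z * z - w * w) = 0 := mod_cast re_eq
  have im_eq_cast : (x : A) * y + y * x - d * (z * w + w * z) = 1 := mod_cast im_eq
  linear_combination re_eq_cast + ι * im_eq_cast + ((y : A) ^ 2 - d * w ^ 2) * hι

theorem stmt3_general {p : ℕ} [Fact p.Prime] (hp : p % 8 = 5) {d : ℚ}
    (hd : Odd (padicValRat p d)) : ¬ ∃ x y z w : ℚ,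
    ((x : ℂ) + (y : ℂ) * Complex.I) ^ 2 - d * ((z : ℂ) + (w : ℂ) * Complex.I) ^ 2
      = Complex.I := by
  rintro ⟨x, y, z, w, h⟩
  obtain ⟨ι, hι⟩ := isSquare_neg_one_padicInt (p := p) (by omega)
  rw [← pow_two, eq_comm] at hι
  have hι_padic : (ι : ℚ_[p]) ^ 2 = -1 := mod_cast congrArg ((↑) : ℤ_[p] → ℚ_[p]) hι
  exact sq_sub_mul_sq_ne_of_sq_eq_neg_one hp hι (by rwa [Padic.valuation_ratCast]) _ _
    (sq_sub_mul_sq_eq_of_complex hι_padic h)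

/-- There are no elements `a = p + q·i` and `b = r + s·i` of `ℚ(i) ⊆ ℂ` with
`a² − 5b² = i`; i.e. `i` is not a relative norm from `ℚ(i,√5)` down to `ℚ(i)`. -/
theorem stmt3 : ¬ ∃ p q r s : ℚ,
    ((p : ℂ) + (q : ℂ) * Complex.I) ^ 2 - 5 * ((r : ℂ) + (s : ℂ) * Complex.I) ^ 2
      = Complex.I := by
  have : Fact (Nat.Prime 5) := ⟨Nat.prime_five⟩
  exact mod_cast stmt3_general (p := 5) (d := (5 : ℕ)) rfl
    (by simp only [padicValRat.self (p := 5) (by norm_num), odd_one])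
end

section
/- Let a, b, c, d be Gaussian integers (elements of ℤ[i] ⊂ ℂ). If (a, b, c, d) ≠ (0, 0, 0, 0), then (a² + ab − b²) − i·(c² + cd − d²) ≠ 0; since this quantity is a Gaussian integer, its squared modulus satisfies |(a² + ab − b²) − i·(c² + cd − d²)|² ≥ 1. (This is the full-diversity / non-vanishing determinant property of the Golden code: with θ = (1+√5)/2, θ̄ = (1−√5)/2, x₀ = a + bθ, x₁ = c + dθ, σ(x₀) = a + bθ̄, σ(x₁) = c + dθ̄, one has x₀σ(x₀) − i·x₁σ(x₁) = (a² + ab − b²) − i·(c² + cd − d²).) -/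
noncomputable section

open Complex GaussianInt

/-- The Golden-code determinant quantity associated with Gaussian integers
`a, b, c, d`: with `x₀ = a + bθ`, `x₁ = c + dθ`, one has
`x₀σ(x₀) − i·x₁σ(x₁) = (a² + ab − b²) − i·(c² + cd − d²)`. -/
def goldenQ (a b c d : GaussianInt) : ℂ :=
  (toComplex a ^ 2 + toComplex a * toComplex b - toComplex b ^ 2)
    - Complex.I * (toComplex c ^ 2 + toComplex c * toComplex d - toComplex d ^ 2)

/-!
Completing squares turns four times the determinant into `q(X, Z) - 5 q(b, d)`, where
`q(x, y) = x² - i y²`, `X = 2a + b` and `Z = 2c + d`; this is the reduced norm form of the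
quaternion algebra `(5, i)` over `ℚ(i)`. The algebra is ramified at the prime `π = 2 - i`:
`i` reduces to the non-square `2` in `ℤ[i]/π = 𝔽₅`, so `q` is anisotropic modulo `π`, while `π`
divides `5 = (2 - i)(2 + i)` exactly once. Hence (Springer) a zero of the form has `X, Z` divisible
by `π`, and dividing the equation by `π` then shows the same for `b, d`. By homogeneity a zero is
therefore divisible by every power of `π`, so it vanishes by Krull's intersection theorem.
-/

section Springer

variable {R M M₁ M₂ : Type*} [CommRing R] [AddCommGroup M] [Module R M]
  [AddCommGroup M₁] [Module R M₁] [AddCommGroup M₂] [Module R M₂] {π u : R}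

/-- The quadratic form `Q` is anisotropic modulo `π`: its reduction `M/πM → R/π` vanishes only at
zero. It is phrased by divisibility in `M`, so that no quotient module is formed. -/
def AnisotropicMod (π : R) (Q : QuadraticForm R M) : Prop :=
  ∀ x, π ∣ Q x → ∃ y, x = π • y

theorem AnisotropicMod.smul {Q : QuadraticForm R M} (hQ : AnisotropicMod π Q) (hπ : Prime π)
    (hu : ¬π ∣ u) : AnisotropicMod π (u • Q) :=
  fun x hx => hQ x ((hπ.dvd_or_dvd hx).resolve_left hu)

variable [IsDomain R]

theorem exists_eq_pow_smul_of_map_eq_zero {Q : QuadraticForm R M} (hπ : π ≠ 0)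
    (hQ : ∀ x, Q x = 0 → ∃ y, x = π • y) {x : M} (hx : Q x = 0) (n : ℕ) :
    ∃ y, Q y = 0 ∧ x = π ^ n • y := by
  induction n with
  | zero => exact ⟨x, hx, by rw [pow_zero, one_smul]⟩
  | succ n ih =>
    obtain ⟨y, hy, rfl⟩ := ih
    obtain ⟨z, rfl⟩ := hQ y hy
    have hz : Q z = 0 := by simpa [QuadraticMap.map_smul, hπ] using hy
    exact ⟨z, hz, by rw [smul_smul, pow_succ]⟩

theorem anisotropic_of_map_eq_zero_imp_exists_eq_smul [IsHausdorff (Ideal.span {π}) M]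
    {Q : QuadraticForm R M} (hπ : π ≠ 0) (hQ : ∀ x, Q x = 0 → ∃ y, x = π • y) :
    Q.Anisotropic := by
  intro x hx
  refine IsHausdorff.haus ‹IsHausdorff (Ideal.span {π}) M› x fun n => ?_
  obtain ⟨y, -, rfl⟩ := exists_eq_pow_smul_of_map_eq_zero hπ hQ hx n
  rw [SModEq.zero]
  exact Submodule.smul_mem_smul (Ideal.pow_mem_pow (Ideal.mem_span_singleton_self π) n) trivial

theorem AnisotropicMod.exists_eq_smul_of_prod_eq_zero {Q₁ : QuadraticForm R M₁}
    {Q₂ : QuadraticForm R M₂} (h₁ : AnisotropicMod π Q₁) (h₂ : AnisotropicMod π Q₂) (hπ : π ≠ 0)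
    (x : M₁ × M₂) (hx : Q₁.prod (π • Q₂) x = 0) : ∃ y, x = π • y := by
  obtain ⟨x₁, x₂⟩ := x
  replace hx : Q₁ x₁ + π * Q₂ x₂ = 0 := hx
  obtain ⟨y₁, rfl⟩ := h₁ x₁ ⟨-Q₂ x₂, by linear_combination hx⟩
  have hx₂ : Q₂ x₂ = π * -Q₁ y₁ := by
    rw [QuadraticMap.map_smul, smul_eq_mul] at hx
    exact mul_left_cancel₀ hπ (by linear_combination hx)
  obtain ⟨y₂, rfl⟩ := h₂ x₂ ⟨_, hx₂⟩
  exact ⟨(y₁, y₂), rfl⟩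

theorem AnisotropicMod.anisotropic_prod [IsHausdorff (Ideal.span {π}) (M₁ × M₂)]
    {Q₁ : QuadraticForm R M₁} {Q₂ : QuadraticForm R M₂} (h₁ : AnisotropicMod π Q₁)
    (h₂ : AnisotropicMod π Q₂) (hπ : π ≠ 0) : (Q₁.prod (π • Q₂)).Anisotropic :=
  anisotropic_of_map_eq_zero_imp_exists_eq_smul hπ (h₁.exists_eq_smul_of_prod_eq_zero h₂ hπ)

end Springer

section BinaryForms

variable {R K : Type*} [CommRing R] [Field K]

theorem eq_zero_of_sq_eq_mul_sq {γ x y : K} (hγ : ¬IsSquare γ) (h : x ^ 2 = γ * y ^ 2) :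
    x = 0 ∧ y = 0 := by
  have hy : y = 0 := by
    by_contra hy
    exact hγ ⟨x / y, by field_simp; exact h.symm⟩
  exact ⟨by simpa [hy] using h, hy⟩

/-- The binary quadratic form `x² - γ y²`, the norm form of `R[√γ]` over `R`. -/
def sqrtNormForm (γ : R) : QuadraticForm R (R × R) :=
  QuadraticMap.sq.prod (-γ • QuadraticMap.sq)

theorem sqrtNormForm_apply (γ x y : R) : sqrtNormForm γ (x, y) = x ^ 2 - γ * y ^ 2 := by
  simp only [sqrtNormForm, QuadraticMap.prod_apply, smul_apply, QuadraticMap.sq_apply,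
    smul_eq_mul]
  ring

theorem anisotropicMod_sqrtNormForm {φ : R →+* K} {π γ : R}
    (hφ : RingHom.ker φ = Ideal.span {π}) (hγ : ¬IsSquare (φ γ)) :
    AnisotropicMod π (sqrtNormForm γ) := by
  have map_eq_zero_iff_dvd (x : R) : φ x = 0 ↔ π ∣ x := by
    rw [← RingHom.mem_ker, hφ, Ideal.mem_span_singleton]
  rintro ⟨x, y⟩ hxy
  rw [sqrtNormForm_apply, ← map_eq_zero_iff_dvd] at hxy
  simp only [map_sub, map_mul, map_pow, sub_eq_zero] at hxy
  obtain ⟨hx, hy⟩ := eq_zero_of_sq_eq_mul_sq hγ hxy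
  obtain ⟨x', rfl⟩ := (map_eq_zero_iff_dvd x).1 hx
  obtain ⟨y', rfl⟩ := (map_eq_zero_iff_dvd y).1 hy
  exact ⟨(x', y'), rfl⟩

/-- The norm `a² + ab - b²` of `a + bθ`, where `θ² = θ + 1`. -/
def goldenNorm (a b : R) : R :=
  a ^ 2 + a * b - b ^ 2

theorem four_mul_goldenNorm_sub (γ a b c d : R) :
    4 * (goldenNorm a b - γ * goldenNorm c d) =
      sqrtNormForm γ (2 * a + b, 2 * c + d) - 5 * sqrtNormForm γ (b, d) := by
  simp only [goldenNorm, sqrtNormForm_apply]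
  ring

end BinaryForms

section GaussianIntegers

open Zsqrtd

/-- Reduction of Gaussian integers modulo the prime `2 - i`, with residue field `𝔽₅`: the ring
homomorphism sending `i` to `2`. -/
def reductionModTwoSubI : GaussianInt →+* ZMod 5 :=
  lift ⟨2, by decide⟩

theorem reductionModTwoSubI_sqrtd : reductionModTwoSubI sqrtd = 2 := by
  simp [reductionModTwoSubI]

theorem ker_reductionModTwoSubI :
    RingHom.ker reductionModTwoSubI = Ideal.span {2 - sqrtd} := by
  ext z
  rw [RingHom.mem_ker, Ideal.mem_span_singleton]
  constructor
  · intro hz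
    have h5 : ((z.re + z.im * 2 : ℤ) : ZMod 5) = 0 := by
      simpa [reductionModTwoSubI] using hz
    obtain ⟨k, hk⟩ := (ZMod.intCast_zmod_eq_zero_iff_dvd _ 5).1 h5
    refine ⟨⟨2 * k - z.im, k⟩, ?_⟩
    ext
    · simp only [re_mul, re_sub, Zsqrtd.re_ofNat, Nat.cast_ofNat, re_sqrtd, im_sub,
        Zsqrtd.im_ofNat, im_sqrtd]
      lia
    · simp
  · rintro ⟨w, rfl⟩
    rw [map_mul, map_sub, map_ofNat, reductionModTwoSubI_sqrtd, sub_self, zero_mul]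

theorem two_sub_sqrtd_ne_zero : (2 - sqrtd : GaussianInt) ≠ 0 := by
  simp [Zsqrtd.ext_iff]

theorem prime_two_sub_sqrtd : Prime (2 - sqrtd : GaussianInt) := by
  have : Fact (Nat.Prime 5) := ⟨Nat.prime_five⟩
  rw [← Ideal.span_singleton_prime two_sub_sqrtd_ne_zero, ← ker_reductionModTwoSubI]
  exact RingHom.ker_isPrime _

theorem not_two_sub_sqrtd_dvd_two_add_sqrtd :
    ¬(2 - sqrtd : GaussianInt) ∣ 2 + sqrtd := by
  rw [← Ideal.mem_span_singleton, ← ker_reductionModTwoSubI, RingHom.mem_ker, map_add, map_ofNat,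
    reductionModTwoSubI_sqrtd]
  decide

theorem five_eq_two_sub_sqrtd_mul_two_add_sqrtd :
    (5 : GaussianInt) = (2 - sqrtd) * (2 + sqrtd) := by
  ext <;> simp

theorem anisotropicMod_sqrtNormForm_sqrtd :
    AnisotropicMod (2 - sqrtd) (sqrtNormForm (sqrtd : GaussianInt)) := by
  have not_isSquare_two : ¬IsSquare (2 : ZMod 5) := by decide
  have : Fact (Nat.Prime 5) := ⟨Nat.prime_five⟩
  exact anisotropicMod_sqrtNormForm ker_reductionModTwoSubI
    (reductionModTwoSubI_sqrtd ▸ not_isSquare_two)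

theorem eq_zero_of_sqrtNormForm_eq_five_mul {x y : GaussianInt × GaussianInt}
    (h : sqrtNormForm sqrtd x = 5 * sqrtNormForm sqrtd y) : x = 0 ∧ y = 0 := by
  have : IsHausdorff (Ideal.span {(2 - sqrtd : GaussianInt)})
      ((GaussianInt × GaussianInt) × (GaussianInt × GaussianInt)) :=
    IsHausdorff.of_isTorsionFree _ _
      (Ideal.span_singleton_eq_top.not.2 prime_two_sub_sqrtd.not_isUnit)
  have anisotropic_mod_smul :
      AnisotropicMod (2 - sqrtd) (-(2 + sqrtd : GaussianInt) • sqrtNormForm sqrtd) :=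
    anisotropicMod_sqrtNormForm_sqrtd.smul prime_two_sub_sqrtd
      (dvd_neg.not.2 not_two_sub_sqrtd_dvd_two_add_sqrtd)
  refine Prod.mk_eq_zero.1 (anisotropicMod_sqrtNormForm_sqrtd.anisotropic_prod
    anisotropic_mod_smul two_sub_sqrtd_ne_zero (x, y) ?_)
  simp only [QuadraticMap.prod_apply, smul_apply, smul_eq_mul, h,
    five_eq_two_sub_sqrtd_mul_two_add_sqrtd]
  ring

theorem eq_zero_of_goldenNorm_sub_sqrtd_mul_goldenNorm_eq_zero {a b c d : GaussianInt}
    (h : goldenNorm a b - sqrtd * goldenNorm c d = 0) : a = 0 ∧ b = 0 ∧ c = 0 ∧ d = 0 := by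
  have hform : sqrtNormForm sqrtd (2 * a + b, 2 * c + d) = 5 * sqrtNormForm sqrtd (b, d) := by
    rw [← sub_eq_zero, ← four_mul_goldenNorm_sub, h, mul_zero]
  obtain ⟨hac, hbd⟩ := eq_zero_of_sqrtNormForm_eq_five_mul hform
  obtain ⟨rfl, rfl⟩ := Prod.mk_eq_zero.1 hbd
  simpa using hac

theorem goldenQ_eq_toComplex (a b c d : GaussianInt) :
    goldenQ a b c d = toComplex (goldenNorm a b - sqrtd * goldenNorm c d) := by
  have toComplex_sqrtd : toComplex sqrtd = Complex.I := by simp [toComplex_def]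
  simp [goldenQ, goldenNorm, toComplex_sqrtd]

theorem one_le_normSq_toComplex {z : GaussianInt} (hz : z ≠ 0) :
    1 ≤ Complex.normSq (toComplex z) := by
  rw [← intCast_real_norm]
  exact_mod_cast GaussianInt.norm_pos.2 hz

end GaussianIntegers

/-- Full diversity / non-vanishing determinant of the Golden code: for Gaussian
integers `a, b, c, d`, not all zero, the quantity
`(a² + ab − b²) − i·(c² + cd − d²)` is a nonzero Gaussian integer; in particular
its squared modulus is at least `1`. -/
theorem stmt4 (a b c d : GaussianInt) (h : ¬(a = 0 ∧ b = 0 ∧ c = 0 ∧ d = 0)) :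
    (∃ g : GaussianInt, goldenQ a b c d = toComplex g) ∧
    goldenQ a b c d ≠ 0 ∧
    1 ≤ Complex.normSq (goldenQ a b c d) := by
  have hne : goldenNorm a b - Zsqrtd.sqrtd * goldenNorm c d ≠ 0 :=
    mt eq_zero_of_goldenNorm_sub_sqrtd_mul_goldenNorm_eq_zero h
  rw [goldenQ_eq_toComplex]
  exact ⟨⟨_, rfl⟩, toComplex_eq_zero.not.2 hne, one_le_normSq_toComplex hne⟩
end
end

section
/- The ring of integers of the number field L = ℚ(i, √5) (a degree-4 extension of ℚ, with ring of integers ℤ[i][θ] where θ = (1+√5)/2) is a principal ideal domain: every ideal of O_L is principal. -/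
open NumberField

/-- The number field `L = ℚ(i, √5)`, realized as a subfield of `ℂ`. -/
noncomputable def L5 : IntermediateField ℚ ℂ :=
  IntermediateField.adjoin ℚ ({Complex.I, (Real.sqrt 5 : ℂ)} : Set ℂ)

/-!
The field `L` is norm-Euclidean. Write `x ∈ L` as `u + v i` with `u, v ∈ F = ℚ(√5)`, so that
`N_{L/ℚ}(x) = N_{F/ℚ}(u² + v²)`. This is nonnegative, and by the inequality of arithmetic and
geometric means for the two conjugates of `u² + v²` it is at most `(Tr(u² + v²) / 2)²`.
The quadratic form `u ↦ Tr(u²)` on the lattice `ℤ[θ]` has squared covering radius `9/10`, so modulo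
`ℤ[θ] + ℤ[θ] i` one can arrange `Tr(u²) ≤ 9/10` and `Tr(v²) ≤ 9/10`, whence `N_{L/ℚ}(x) ≤ 81/100`.
-/

theorem isPrincipalIdealRing_of_exists_abs_map_sub_lt_one {R K : Type*} [CommRing R] [Field K]
    [Algebra R K] [FaithfulSMul R K] (N : K →*₀ ℚ)
    (exists_int : ∀ r : R, ∃ n : ℤ, (n : ℚ) = N (algebraMap R K r))
    (exists_near : ∀ x : K, ∃ r : R, |N (x - algebraMap R K r)| < 1) :
    IsPrincipalIdealRing R := by
  choose ν hν using exists_int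
  refine ⟨fun I ↦ ?_⟩
  rcases eq_or_ne I ⊥ with rfl | hI
  · exact bot_isPrincipal
  obtain ⟨d, ⟨hdI, hd⟩, d_min⟩ := exists_minimalFor_of_wellFoundedLT
    (fun r : R ↦ r ∈ I ∧ r ≠ 0) (fun r ↦ (ν r).natAbs) (Submodule.exists_mem_ne_zero_of_ne_bot hI)
  have hdK : algebraMap R K d ≠ 0 :=
    (map_ne_zero_iff _ (FaithfulSMul.algebraMap_injective R K)).mpr hd
  refine ⟨d, le_antisymm (fun z hz ↦ ?_) ((Ideal.span_singleton_le_iff_mem I).mpr hdI)⟩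
  obtain ⟨q, hq⟩ := exists_near (algebraMap R K z / algebraMap R K d)
  have N_remainder : N (algebraMap R K (z - q * d)) =
      N (algebraMap R K z / algebraMap R K d - algebraMap R K q) * N (algebraMap R K d) := by
    rw [← map_mul, sub_mul, div_mul_cancel₀ _ hdK, map_sub, map_mul]
  have natAbs_remainder_lt : (ν (z - q * d)).natAbs < (ν d).natAbs := by
    rw [← Nat.cast_lt (α := ℚ), Nat.cast_natAbs, Nat.cast_natAbs, Int.cast_abs, Int.cast_abs,
      hν, hν, N_remainder, abs_mul]
    exact mul_lt_of_lt_one_left (abs_pos.mpr <| (map_ne_zero N).mpr hdK) hq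
  have remainder_eq_zero : z - q * d = 0 := by
    by_contra h
    have natAbs_le := d_min ⟨I.sub_mem hz (I.mul_mem_left q hdI), h⟩ natAbs_remainder_lt.le
    exact natAbs_le.not_gt natAbs_remainder_lt
  exact Ideal.mem_span_singleton'.mpr ⟨q, (sub_eq_zero.mp remainder_eq_zero).symm⟩

section QuadraticAlgebra

open QuadraticAlgebra

variable {R : Type*} [CommRing R] {a b : R}

theorem trace_sq_sub_four_mul_norm (z : QuadraticAlgebra R a b) :
    trace z ^ 2 - 4 * norm z = (b ^ 2 + 4 * a) * z.im ^ 2 := by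
  rw [trace_def, norm_def]
  ring

theorem two_mul_trace_sq (z : QuadraticAlgebra R a b) :
    2 * trace (z ^ 2) = trace z ^ 2 + (b ^ 2 + 4 * a) * z.im ^ 2 := by
  simp only [trace_def, pow_two, re_mul, im_mul]
  ring

theorem norm_sq_add_sq (u v : QuadraticAlgebra R a b) :
    norm (u ^ 2 + v ^ 2) = (norm u - norm v) ^ 2 + trace (u * star v) ^ 2 := by
  simp only [norm_def, trace_def, pow_two, re_add, im_add, re_mul, im_mul, re_star, im_star]
  ring

theorem isIntegral_quadraticAlgebra_norm {z : QuadraticAlgebra R a b} (hz : IsIntegral ℤ z) :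
    IsIntegral ℤ (norm z) := by
  rw [← isIntegral_algebraMap_iff (algebraMap_injective (a := a) (b := b)),
    algebraMap_norm_eq_mul_star]
  exact hz.mul (map_isIntegral_int (starRingEnd _) hz)

section LinearOrder

variable {k : Type*} [Field k] [LinearOrder k] [IsStrictOrderedRing k] {a b : k}

theorem norm_le_trace_div_two_sq (hab : 0 ≤ b ^ 2 + 4 * a) (z : QuadraticAlgebra k a b) :
    norm z ≤ (trace z / 2) ^ 2 := by
  linarith [trace_sq_sub_four_mul_norm z, mul_nonneg hab (sq_nonneg z.im)]

theorem trace_sq_nonneg (hab : 0 ≤ b ^ 2 + 4 * a) (z : QuadraticAlgebra k a b) :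
    0 ≤ trace (z ^ 2) := by
  linarith [two_mul_trace_sq z, sq_nonneg (trace z), mul_nonneg hab (sq_nonneg z.im)]

end LinearOrder

section Tower

variable {S : Type*} [CommRing S] [Algebra S R]

open Polynomial in
theorem isIntegral_quadraticAlgebra_omega (ha : IsIntegral S a) (hb : IsIntegral S b) :
    IsIntegral S (ω : QuadraticAlgebra R a b) := by
  refine isIntegral_trans (A := integralClosure S R) _
    ⟨X ^ 2 - Polynomial.C ⟨b, hb⟩ * X - Polynomial.C ⟨a, ha⟩, by monicity!, ?_⟩
  ext <;> simp [pow_two, Subalgebra.algebraMap_def]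

theorem isIntegral_quadraticAlgebra_mk {x y : R} (ha : IsIntegral S a) (hb : IsIntegral S b)
    (hx : IsIntegral S x) (hy : IsIntegral S y) :
    IsIntegral S (⟨x, y⟩ : QuadraticAlgebra R a b) := by
  rw [mk_eq_add_smul_omega, Algebra.smul_def]
  exact hx.algebraMap.add (hy.algebraMap.mul (isIntegral_quadraticAlgebra_omega ha hb))

end Tower

variable {A : Type*} [CommRing A]

/-- The extension of a ring homomorphism `f : R → A` to the quadratic algebra `R[ω]` sending `ω` to
a root `u` of the image of its defining polynomial. Unlike `QuadraticAlgebra.lift`, it does not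
presuppose an `R`-algebra structure on `A`. -/
def quadraticExtension (f : R →+* A) (u : A) (hu : u * u = f a + f b * u) :
    QuadraticAlgebra R a b →+* A :=
  letI : Algebra R A := f.toAlgebra
  have u_mul_u : u * u = a • 1 + b • u := by
    rw [hu, Algebra.smul_def, mul_one, Algebra.smul_def]
    rfl
  (lift ⟨u, u_mul_u⟩ : QuadraticAlgebra R a b →ₐ[R] A)

theorem quadraticExtension_apply (f : R →+* A) (u : A) (hu : u * u = f a + f b * u)
    (z : QuadraticAlgebra R a b) : quadraticExtension f u hu z = f z.re + f z.im * u := by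
  let : Algebra R A := f.toAlgebra
  change z.re • 1 + z.im • u = _
  rw [Algebra.smul_def, mul_one, Algebra.smul_def]
  rfl

end QuadraticAlgebra

section Covering

variable {k : Type*} [Field k] [LinearOrder k] [IsStrictOrderedRing k]

theorem four_mul_sq_add_five_mul_sq_le {p q : k} (hp : 0 ≤ p) (hp' : p ≤ 1 / 2) (hq : 0 ≤ q)
    (hpq : 2 * p + 5 * q ≤ 3) : 4 * p ^ 2 + 5 * q ^ 2 ≤ 9 / 5 := by
  have : (5 * q) ^ 2 ≤ (3 - 2 * p) ^ 2 := by gcongr; linarith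
  nlinarith [mul_nonneg hp (sub_nonneg.mpr hp')]

theorem exists_int_four_mul_sq_add_five_mul_sq_le {s t : k} (hs : |s| ≤ 1 / 2)
    (ht : |t| ≤ 1 / 2) :
    ∃ m n : ℤ, 4 * (s - m - n / 2) ^ 2 + 5 * (t - n) ^ 2 ≤ 9 / 5 := by
  rcases le_total (2 * |s| + 5 * |t|) 3 with h | h
  · refine ⟨0, 0, ?_⟩
    simpa using four_mul_sq_add_five_mul_sq_le (abs_nonneg s) hs (abs_nonneg t) h
  · -- Exchanging the lattice points `(0, 0)` and `(±1/2, ±1)` reverses the inequality `h`.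
    have reflected := four_mul_sq_add_five_mul_sq_le (p := 1 / 2 - |s|) (q := 1 - |t|)
      (by linarith) (by linarith [abs_nonneg s]) (by linarith) (by linarith)
    rcases abs_cases s with ⟨hs, -⟩ | ⟨hs, -⟩ <;> rcases abs_cases t with ⟨ht, -⟩ | ⟨ht, -⟩ <;>
      rw [hs, ht] at reflected
    · exact ⟨0, 1, by push_cast; linarith⟩
    · exact ⟨1, -1, by push_cast; linarith⟩
    · exact ⟨-1, 1, by push_cast; linarith⟩
    · exact ⟨0, -1, by push_cast; linarith⟩

theorem exists_int_trace_form_le [FloorRing k] (x y : k) : ∃ m n : ℤ,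
    2 * (x - m) ^ 2 + 2 * (x - m) * (y - n) + 3 * (y - n) ^ 2 ≤ 9 / 10 := by
  set t := y - round y with ht
  set s := x + t / 2 - round (x + t / 2) with hs
  obtain ⟨m, n, h⟩ := exists_int_four_mul_sq_add_five_mul_sq_le (s := s) (t := t)
    (abs_sub_round _) (abs_sub_round _)
  refine ⟨round (x + t / 2) + m, round y + n, ?_⟩
  rw [hs] at h
  push_cast
  rw [sub_add_eq_sub_sub y, ← ht]
  linarith

end Covering

section Biquadratic

open QuadraticAlgebra

/-- The real quadratic field `ℚ(√5) = ℚ(θ)`, in coordinates `⟨x, y⟩ = x + y θ` with `θ² = 1 + θ`. -/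
abbrev GoldenField : Type := QuadraticAlgebra ℚ 1 1

/-- The field `ℚ(i, √5)`, in coordinates `⟨u, v⟩ = u + v i` with `u, v ∈ ℚ(√5)`. -/
abbrev GoldenGaussianField : Type := QuadraticAlgebra GoldenField (-1) 0

instance : Fact (∀ r : ℚ, r ^ 2 ≠ 1 + 1 * r) where
  out r hr := by
    have not_isSquare : ¬IsSquare (5 : ℚ) := by norm_num
    exact not_isSquare ⟨2 * r - 1, by linear_combination -4 * hr⟩

instance : Fact (∀ r : GoldenField, r ^ 2 ≠ -1 + 0 * r) where
  out r hr := by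
    have re_eq : r.re * r.re + r.im * r.im = -1 := by simpa [pow_two] using congrArg re hr
    nlinarith [mul_self_nonneg r.re, mul_self_nonneg r.im]

theorem exists_int_trace_sub_sq_le (u : GoldenField) :
    ∃ m n : ℤ, trace ((u - ⟨m, n⟩) ^ 2) ≤ 9 / 10 := by
  obtain ⟨m, n, h⟩ := exists_int_trace_form_le u.re u.im
  refine ⟨m, n, le_of_eq_of_le ?_ h⟩
  simp only [trace_def, pow_two, re_mul, im_mul, re_sub, im_sub]
  ring

/-- The norm of `ℚ(i, √5) / ℚ`, computed through the intermediate field `ℚ(√5)`. -/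
def goldenGaussianNorm : GoldenGaussianField →*₀ ℚ where
  __ := (norm : GoldenField →* ℚ).comp (norm : GoldenGaussianField →* GoldenField)
  map_zero' := by simp

theorem goldenGaussianNorm_apply (x : GoldenGaussianField) :
    goldenGaussianNorm x = norm (x.re ^ 2 + x.im ^ 2) := by
  change norm (norm x) = _
  rw [norm_def x]
  congr 1
  ring

theorem goldenGaussianNorm_nonneg (x : GoldenGaussianField) : 0 ≤ goldenGaussianNorm x := by
  rw [goldenGaussianNorm_apply, norm_sq_add_sq]
  positivity

theorem goldenGaussianNorm_le (x : GoldenGaussianField) :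
    goldenGaussianNorm x ≤ ((trace (x.re ^ 2) + trace (x.im ^ 2)) / 2) ^ 2 := by
  rw [goldenGaussianNorm_apply, ← map_add]
  exact norm_le_trace_div_two_sq (by norm_num) _

theorem exists_int_goldenGaussianNorm_eq (x : 𝓞 GoldenGaussianField) :
    ∃ n : ℤ, (n : ℚ) = goldenGaussianNorm x :=
  IsIntegrallyClosed.isIntegral_iff.mp <|
    isIntegral_quadraticAlgebra_norm <| isIntegral_quadraticAlgebra_norm x.isIntegral_coe

theorem exists_abs_goldenGaussianNorm_sub_lt_one (x : GoldenGaussianField) :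
    ∃ y : 𝓞 GoldenGaussianField, |goldenGaussianNorm (x - y)| < 1 := by
  obtain ⟨m, n, hre⟩ := exists_int_trace_sub_sq_le x.re
  obtain ⟨m', n', him⟩ := exists_int_trace_sub_sq_le x.im
  have isIntegral_golden (m n : ℤ) : IsIntegral ℤ (⟨m, n⟩ : GoldenField) :=
    isIntegral_quadraticAlgebra_mk isIntegral_one isIntegral_one
      isIntegral_algebraMap isIntegral_algebraMap
  let y : GoldenGaussianField := ⟨⟨m, n⟩, ⟨m', n'⟩⟩
  have hy : IsIntegral ℤ y :=
    isIntegral_quadraticAlgebra_mk (S := ℤ) (isIntegral_one (R := ℤ) (B := GoldenField)).neg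
      (isIntegral_zero (R := ℤ) (B := GoldenField))
      (isIntegral_golden m n) (isIntegral_golden m' n')
  refine ⟨⟨y, hy⟩, ?_⟩
  rw [abs_of_nonneg (goldenGaussianNorm_nonneg _)]
  calc
    goldenGaussianNorm (x - y)
    _ ≤ ((trace ((x - y).re ^ 2) + trace ((x - y).im ^ 2)) / 2) ^ 2 := goldenGaussianNorm_le _
    _ ≤ ((9 / 10 + 9 / 10) / 2) ^ 2 := by
      rw [re_sub, im_sub]
      have re_nonneg := trace_sq_nonneg (by norm_num) (x.re - y.re)
      have im_nonneg := trace_sq_nonneg (by norm_num) (x.im - y.im)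
      gcongr
    _ < 1 := by norm_num

instance isPrincipalIdealRing_goldenGaussianField :
    IsPrincipalIdealRing (𝓞 GoldenGaussianField) :=
  isPrincipalIdealRing_of_exists_abs_map_sub_lt_one goldenGaussianNorm
    exists_int_goldenGaussianNorm_eq exists_abs_goldenGaussianNorm_sub_lt_one

end Biquadratic

section Embedding

open Real

/-- The embedding of `ℚ(i, √5)` into `ℂ` with `θ ↦ (1 + √5) / 2` and `i ↦ i`. -/
noncomputable def goldenGaussianEmbedding : GoldenGaussianField →ₐ[ℚ] ℂ :=
  RingHom.toRatAlgHom <| quadraticExtension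
    (quadraticExtension (algebraMap ℚ ℂ) goldenRatio <| by
      rw [← pow_two, ← Complex.ofReal_pow, goldenRatio_sq]
      simp [add_comm])
    Complex.I (by simp)

theorem goldenGaussianEmbedding_apply (z : GoldenGaussianField) :
    goldenGaussianEmbedding z = z.re.re + z.re.im * (goldenRatio : ℂ) +
      (z.im.re + z.im.im * (goldenRatio : ℂ)) * Complex.I := by
  simp [goldenGaussianEmbedding, quadraticExtension_apply]

theorem goldenGaussianEmbedding_mem_L5 (z : GoldenGaussianField) :
    goldenGaussianEmbedding z ∈ L5 := by
  have I_mem : Complex.I ∈ L5 := IntermediateField.subset_adjoin _ _ (by simp)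
  have sqrt_five_mem : (√5 : ℂ) ∈ L5 := IntermediateField.subset_adjoin _ _ (by simp)
  have goldenRatio_mem : (goldenRatio : ℂ) ∈ L5 := by
    rw [goldenRatio]
    push_cast
    exact div_mem (add_mem (one_mem _) sqrt_five_mem) (ofNat_mem L5 2)
  have golden_mem (u : GoldenField) : (u.re + u.im * goldenRatio : ℂ) ∈ L5 :=
    add_mem (SubfieldClass.ratCast_mem _ _) <|
      mul_mem (SubfieldClass.ratCast_mem _ _) goldenRatio_mem
  rw [goldenGaussianEmbedding_apply]
  exact add_mem (golden_mem _) (mul_mem (golden_mem _) I_mem)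

theorem fieldRange_goldenGaussianEmbedding : goldenGaussianEmbedding.fieldRange = L5 := by
  refine le_antisymm ?_ (IntermediateField.adjoin_le_iff.mpr ?_)
  · rintro _ ⟨z, rfl⟩
    exact goldenGaussianEmbedding_mem_L5 z
  · rintro _ (rfl | rfl)
    · exact ⟨⟨0, ⟨1, 0⟩⟩, (goldenGaussianEmbedding_apply _).trans (by simp)⟩
    · refine ⟨⟨⟨-1, 2⟩, 0⟩, (goldenGaussianEmbedding_apply _).trans ?_⟩
      simp [goldenRatio, mul_div_cancel₀]

end Embedding

/-- The ring of integers of `L = ℚ(i, √5)` is a principal ideal domain: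
every ideal of `O_L` is principal. -/
theorem stmt8 : IsPrincipalIdealRing (𝓞 ↥L5) := by
  rw [← fieldRange_goldenGaussianEmbedding]
  let e : 𝓞 GoldenGaussianField ≃+* 𝓞 goldenGaussianEmbedding.fieldRange :=
    RingOfIntegers.mapRingEquiv (AlgEquiv.ofInjectiveField goldenGaussianEmbedding).toRingEquiv
  exact .of_surjective e e.surjective
end
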